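/- Let Z be a real random variable whose moment generating function ψ(u) = E[e^{uZ}] is finite for all u in an open interval containing 0. For n ≥ 1 let κ_n denote the n-th cumulant of Z, i.e., the n-th derivative at u = 0 of the cumulant generating function u ↦ log E[e^{uZ}]. Then for every n ≥ 1 the n-th moment of Z satisfies E[Z^n] = Γ_n(κ_1, …, κ_n), where Γ_n are the Kendall polynomials. -/

import Mathlib

open MeasureTheory ProbabilityTheory

/-- The Kendall polynomials `Γ_n`, expressing moments in terms of cumulants:
`Γ_0 = 1` and `Γ_{n+1}(x_1,…,x_{n+1}) = Σ_{j=0}^n C(n,j) Γ_j(x_1,…,x_j) x_{n+1-j}`.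
Only the values `x 1, …, x n` of the argument function are used by `kendall n x`. -/
noncomputable def kendall : ℕ → (ℕ → ℝ) → ℝ
  | 0, _ => 1
  | n + 1, x =>
      ∑ j ∈ (Finset.range (n + 1)).attach,
        (n.choose j.1 : ℝ) * kendall j.1 x * x (n + 1 - j.1)
decreasing_by exact Finset.mem_range.mp j.2

/-- The defining recurrence of the Kendall polynomials, as a sum over a range. -/
theorem kendall_succ_range (n : ℕ) (x : ℕ → ℝ) :
    kendall (n + 1) x =
      ∑ j ∈ Finset.range (n + 1), (n.choose j : ℝ) * kendall j x * x (n + 1 - j) := by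
  rw [kendall]
  exact Finset.sum_attach (Finset.range (n + 1))
    (fun j => (n.choose j : ℝ) * kendall j x * x (n + 1 - j))

/-- If the moment generating function of a real random variable `Z` is finite on an open
interval around `0`, and `κ_n` denotes the `n`-th cumulant of `Z` (the `n`-th derivative at `0`
of the cumulant generating function `u ↦ log E[e^{uZ}]`), then for every `n ≥ 1` the `n`-th
moment satisfies `E[Z^n] = Γ_n(κ_1, …, κ_n)`, where `Γ_n` are the Kendall polynomials. -/
theorem moment_eq_kendall_cumulants
    {Ω : Type*} {mΩ : MeasurableSpace Ω} (μ : Measure Ω) [IsProbabilityMeasure μ]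
    (Z : Ω → ℝ) (hZ : Measurable Z)
    (hmgf : ∃ ε : ℝ, 0 < ε ∧ ∀ u : ℝ, |u| < ε →
      Integrable (fun ω => Real.exp (u * Z ω)) μ)
    (n : ℕ) (hn : 1 ≤ n) :
    ∫ ω, Z ω ^ n ∂μ = kendall n fun j => iteratedDeriv j (cgf Z μ) 0 := by
  obtain ⟨ε, hε, hint⟩ := hmgf
  have h0 : (0 : ℝ) ∈ interior (integrableExpSet Z μ) := by
    rw [mem_interior_iff_mem_nhds]
    filter_upwards [Metric.ball_mem_nhds (0 : ℝ) hε] with u hu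
    exact hint u (by simpa using hu)
  have hM : ContDiffAt ℝ ⊤ (mgf Z μ) 0 := (analyticAt_mgf h0).contDiffAt
  have hK : ContDiffAt ℝ ⊤ (deriv (cgf Z μ)) 0 := (analyticAt_cgf h0).deriv.contDiffAt
  have hev : deriv (mgf Z μ) =ᶠ[nhds 0] mgf Z μ * deriv (cgf Z μ) := by
    filter_upwards [isOpen_interior.eventually_mem h0] with u hu
    have hpos : 0 < mgf Z μ u := mgf_pos (interior_subset hu : u ∈ integrableExpSet Z μ)
    rw [Pi.mul_apply, deriv_cgf hu, deriv_mgf hu]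
    exact (mul_div_cancel₀ _ hpos.ne').symm
  have key : ∀ m : ℕ, iteratedDeriv m (mgf Z μ) 0
      = kendall m fun j => iteratedDeriv j (cgf Z μ) 0 := by
    intro m
    induction m using Nat.strong_induction_on with
    | _ m ih =>
      cases m with
      | zero => simp [kendall]
      | succ m =>
        rw [iteratedDeriv_succ', hev.iteratedDeriv_eq m,
          iteratedDeriv_mul (hM.of_le le_top) (hK.of_le le_top), kendall_succ_range]
        refine Finset.sum_congr rfl fun i hi => ?_
        have hi' : i < m + 1 := Finset.mem_range.mp hi
        rw [ih i hi', ← iteratedDeriv_succ', show m - i + 1 = m + 1 - i by omega]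
  have h := iteratedDeriv_mgf_zero h0 n
  rw [key n] at h
  simpa using h.symm
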